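/- Let B = [[1,−1],[1/2,1/2]], so B⁻¹ = [[1/2,1],[−1/2,1]]. For every n ≥ 1, the change of basis of the n-arity EQUAL cogate C = ⟨0…0| + ⟨1…1| under (B,…,B), namely the vector C′(b) = Σ_{c∈{0,1}^n} C(c)·∏_{i=1}^n B⁻¹(cᵢ,bᵢ), equals 2·Σ_{b ∈ {0,1}^n with n−|b| even} (1/4)^{(n−|b|)/2} ⟨b|, where |b| denotes the number of ones in b. Moreover, for the n×n skew-symmetric matrix Θ with Θ_{ij} = 1/4 for all i < j, Pf(Θ|_K) = (1/4)^{|K|/2} for every K of even cardinality; consequently the n-arity EQUAL cogate is Pfaffian with C′ = 2·sPf*(Θ). -/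

import Mathlib

/-!
At a bitstring with `k` zeros the transformed EQUAL cogate takes the value
`(1/2) ^ k + (-1/2) ^ k`, because the column of `B⁻¹` selected by a one is `(1, 1)` and the column
selected by a zero is `(1/2, -1/2)`. This is `2 * (1/2) ^ k` for even `k` and `0` for odd `k`.

If the entries of `Ξ` above the diagonal are `x i * x j`, then every perfect matching of `K`
contributes the monomial `∏ i ∈ K, x i` up to sign, and by induction on the first-row expansion
the signs add up to `1`: the column of rank `r` has sign `(-1) ^ r`, and `r` runs over `2, …, |K|`.
Hence the sub-Pfaffian on a set `K` of even size is `∏ i ∈ K, x i`; `Θ` is the case `x i = 1/2`.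
-/

open scoped BigOperators

noncomputable section

/-- Change of basis on an `n`-arity gate: `((A₁⊗…⊗Aₙ)G)(b) = Σ_c (∏ᵢ Aᵢ(bᵢ,cᵢ))·G(c)`. -/
def cobGate {n : ℕ} (A : Fin n → Matrix (Fin 2) (Fin 2) ℂ) (G : (Fin n → Fin 2) → ℂ) :
    (Fin n → Fin 2) → ℂ :=
  fun b => ∑ c : Fin n → Fin 2, (∏ i, A i (b i) (c i)) * G c

/-- Change of basis on an `n`-arity cogate: `C′(b) = Σ_c C(c)·∏ᵢ Aᵢ⁻¹(cᵢ,bᵢ)`. -/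
def cobCogate {n : ℕ} (A : Fin n → Matrix (Fin 2) (Fin 2) ℂ) (C : (Fin n → Fin 2) → ℂ) :
    (Fin n → Fin 2) → ℂ :=
  fun b => ∑ c : Fin n → Fin 2, C c * ∏ i, (A i)⁻¹ (c i) (b i)

/-- The standard basis vector (ket/bra) at the bitstring `v`. -/
def ket {n : ℕ} (v : Fin n → Fin 2) : (Fin n → Fin 2) → ℂ :=
  fun b => if b = v then 1 else 0

/-- The support of a bitstring. -/
def supp {n : ℕ} (b : Fin n → Fin 2) : Finset (Fin n) :=
  Finset.univ.filter fun i => b i = 1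

/-- Fuel-driven Laplace expansion of the Pfaffian of a principal submatrix. -/
def subPfAux {n : ℕ} (Ξ : Matrix (Fin n) (Fin n) ℂ) : ℕ → Finset (Fin n) → ℂ
  | 0, I => if I = ∅ then 1 else 0
  | fuel + 1, I =>
    if hI : I.Nonempty then
      if Odd I.card then 0
      else
        ∑ i ∈ I.erase (I.min' hI),
          (-1 : ℂ) ^ (I.filter fun j => j ≤ i).card * Ξ (I.min' hI) i *
            subPfAux Ξ fuel ((I.erase (I.min' hI)).erase i)
    else 1

/-- `subPf Ξ I` is the Pfaffian `Pf(Ξ|_I)` of the principal submatrix of `Ξ` on the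
rows and columns in `I` (`1` on the empty set, `0` for odd `|I|`). -/
def subPf {n : ℕ} (Ξ : Matrix (Fin n) (Fin n) ℂ) (I : Finset (Fin n)) : ℂ :=
  subPfAux Ξ I.card I

/-- The sub-Pfaffian vector: coordinate `Pf(Ξ|_I)` at the bitstring with support `I`. -/
def sPf {n : ℕ} (Ξ : Matrix (Fin n) (Fin n) ℂ) : (Fin n → Fin 2) → ℂ :=
  fun b => subPf Ξ (supp b)

/-- The dual sub-Pfaffian vector: coordinate `Pf(Θ|_{Jᶜ})` at the bitstring with support `J`. -/
def sPfStar {n : ℕ} (Θ : Matrix (Fin n) (Fin n) ℂ) : (Fin n → Fin 2) → ℂ :=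
  fun b => subPf Θ (supp b)ᶜ

/-- A matrix is skew-symmetric. -/
def IsSkew {n : ℕ} (Ξ : Matrix (Fin n) (Fin n) ℂ) : Prop :=
  ∀ i j, Ξ j i = -Ξ i j

/-- A gate is Pfaffian under the change of basis `M`. -/
def IsPfaffGate {n : ℕ} (M : Fin n → Matrix (Fin 2) (Fin 2) ℂ) (G : (Fin n → Fin 2) → ℂ) : Prop :=
  ∃ (α : ℂ) (Ξ : Matrix (Fin n) (Fin n) ℂ), IsSkew Ξ ∧ cobGate M G = fun b => α * sPf Ξ b

/-- A cogate is Pfaffian under the change of basis `M`. -/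
def IsPfaffCogate {n : ℕ} (M : Fin n → Matrix (Fin 2) (Fin 2) ℂ) (C : (Fin n → Fin 2) → ℂ) : Prop :=
  ∃ (β : ℂ) (Θ : Matrix (Fin n) (Fin n) ℂ), IsSkew Θ ∧ cobCogate M C = fun b => β * sPfStar Θ b

def matB : Matrix (Fin 2) (Fin 2) ℂ := !![1, -1; 1/2, 1/2]

/-- The skew-symmetric matrix with `1/4` above the diagonal. -/
def quarterSkew (n : ℕ) : Matrix (Fin n) (Fin n) ℂ :=
  Matrix.of fun i j => if i < j then (1/4 : ℂ) else if j < i then -(1/4) else 0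

theorem sum_card_filter_le {α M : Type*} [LinearOrder α] [AddCommMonoid M] (s : Finset α)
    (f : ℕ → M) :
    ∑ i ∈ s, f (s.filter fun j => j ≤ i).card = ∑ k ∈ Finset.range s.card, f (k + 1) := by
  induction s using Finset.induction_on_max with
  | empty => simp
  | insert a s ha ih =>
    have ha_notMem : a ∉ s := fun h => lt_irrefl a (ha a h)
    have filter_max : ((insert a s).filter fun j => j ≤ a) = insert a s :=
      Finset.filter_true_of_mem (by simpa using fun j hj => (ha j hj).le)
    have filter_old : ∀ i ∈ s,
        ((insert a s).filter fun j => j ≤ i) = s.filter fun j => j ≤ i := fun i hi => by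
      rw [Finset.filter_insert, if_neg (ha i hi).not_ge]
    rw [Finset.sum_insert ha_notMem, filter_max, Finset.card_insert_of_notMem ha_notMem,
      Finset.sum_congr rfl fun i hi => by rw [filter_old i hi], ih, Finset.sum_range_succ, add_comm]

theorem filter_le_min' {α : Type*} [LinearOrder α] (s : Finset α) (hs : s.Nonempty) :
    (s.filter fun j => j ≤ s.min' hs) = {s.min' hs} := by
  ext j
  simp only [Finset.mem_filter, Finset.mem_singleton]
  constructor
  · rintro ⟨hj, hle⟩
    exact hle.antisymm (s.min'_le j hj)
  · rintro rfl
    exact ⟨s.min'_mem hs, le_rfl⟩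

theorem sum_erase_min'_neg_one_pow_card_filter_le {α R : Type*} [LinearOrder α] [Ring R]
    (s : Finset α) (hs : s.Nonempty) (heven : Even s.card) :
    ∑ i ∈ s.erase (s.min' hs), (-1 : R) ^ (s.filter fun j => j ≤ i).card = 1 := by
  have total : ∑ i ∈ s, (-1 : R) ^ (s.filter fun j => j ≤ i).card = 0 := by
    rw [sum_card_filter_le s fun k => (-1 : R) ^ k]
    simp only [pow_succ, ← Finset.sum_mul, neg_one_geom_sum, if_pos heven, zero_mul]
  rwa [← Finset.add_sum_erase _ _ (s.min'_mem hs), filter_le_min', Finset.card_singleton, pow_one,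
    neg_add_eq_zero, eq_comm] at total

theorem card_erase_erase_add_two {α : Type*} [DecidableEq α] {s : Finset α} {a b : α}
    (ha : a ∈ s) (hb : b ∈ s.erase a) : ((s.erase a).erase b).card + 2 = s.card := by
  rw [← Finset.card_erase_add_one ha, ← Finset.card_erase_add_one hb]

theorem pow_add_neg_pow {R : Type*} [Ring R] (x : R) (k : ℕ) :
    x ^ k + (-x) ^ k = if Even k then 2 * x ^ k else 0 := by
  split_ifs with hk
  · rw [hk.neg_pow, two_mul]
  · rw [(Nat.not_even_iff_odd.mp hk).neg_pow, add_neg_cancel]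

section Pfaffian

variable {n : ℕ} (Ξ : Matrix (Fin n) (Fin n) ℂ)

-- Each expansion step spends one unit of fuel but removes two elements of `I`.
theorem subPfAux_succ_eq {fuel : ℕ} {I : Finset (Fin n)} (hI : I.card ≤ fuel) :
    subPfAux Ξ (fuel + 1) I = subPfAux Ξ fuel I := by
  induction fuel generalizing I with
  | zero =>
    obtain rfl : I = ∅ := Finset.card_eq_zero.mp (Nat.le_zero.mp hI)
    simp [subPfAux]
  | succ fuel ih =>
    rw [subPfAux, subPfAux]
    refine dite_congr rfl (fun hne => if_congr Iff.rfl rfl (Finset.sum_congr rfl fun i hi => ?_))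
      fun _ => rfl
    have hcard := card_erase_erase_add_two (I.min'_mem hne) hi
    rw [ih (by omega)]

theorem subPfAux_eq_subPf {fuel : ℕ} {I : Finset (Fin n)} (hI : I.card ≤ fuel) :
    subPfAux Ξ fuel I = subPf Ξ I := by
  induction fuel, hI using Nat.le_induction with
  | base => rfl
  | succ fuel hI ih => rw [subPfAux_succ_eq Ξ hI, ih]

theorem subPf_empty : subPf Ξ ∅ = 1 := by
  simp [subPf, subPfAux]

theorem subPf_of_odd {I : Finset (Fin n)} (hodd : Odd I.card) : subPf Ξ I = 0 := by
  rw [← subPfAux_eq_subPf Ξ I.card.le_succ, subPfAux, dif_pos (Finset.card_pos.mp hodd.pos),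
    if_pos hodd]

theorem subPf_eq_sum_erase_min' {I : Finset (Fin n)} (hI : I.Nonempty) (heven : Even I.card) :
    subPf Ξ I = ∑ i ∈ I.erase (I.min' hI),
      (-1 : ℂ) ^ (I.filter fun j => j ≤ i).card * Ξ (I.min' hI) i *
        subPf Ξ ((I.erase (I.min' hI)).erase i) := by
  rw [← subPfAux_eq_subPf Ξ I.card.le_succ, subPfAux, dif_pos hI,
    if_neg (Nat.not_odd_iff_even.mpr heven)]
  refine Finset.sum_congr rfl fun i _ => ?_
  rw [subPfAux_eq_subPf Ξ (Finset.card_erase_le.trans Finset.card_erase_le)]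

variable {Ξ}

theorem subPf_eq_prod {x : Fin n → ℂ} (hΞ : ∀ i j, i < j → Ξ i j = x i * x j)
    (K : Finset (Fin n)) (heven : Even K.card) : subPf Ξ K = ∏ i ∈ K, x i := by
  induction K using Finset.strongInduction with
  | H K ih =>
    obtain rfl | hK := K.eq_empty_or_nonempty
    · rw [subPf_empty, Finset.prod_empty]
    have hmin := K.min'_mem hK
    have term_eq : ∀ i ∈ K.erase (K.min' hK),
        Ξ (K.min' hK) i * subPf Ξ ((K.erase (K.min' hK)).erase i) = ∏ j ∈ K, x j := by
      intro i hi
      have hsub : (K.erase (K.min' hK)).erase i ⊂ K :=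
        (Finset.erase_subset _ _).trans_ssubset (Finset.erase_ssubset hmin)
      have heven' : Even ((K.erase (K.min' hK)).erase i).card := by
        rwa [← card_erase_erase_add_two hmin hi, Nat.even_add, iff_true_right even_two] at heven
      rw [hΞ _ _ (K.min'_lt_of_mem_erase_min' hK hi), ih _ hsub heven', mul_assoc,
        Finset.mul_prod_erase _ _ hi, Finset.mul_prod_erase _ _ hmin]
    simp_rw [subPf_eq_sum_erase_min' Ξ hK heven, mul_assoc]
    rw [Finset.sum_congr rfl fun i hi => by rw [term_eq i hi], ← Finset.sum_mul,
      sum_erase_min'_neg_one_pow_card_filter_le K hK heven, one_mul]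

end Pfaffian

section Cogate

variable {n : ℕ}

theorem cobCogate_add (A : Fin n → Matrix (Fin 2) (Fin 2) ℂ) (C D : (Fin n → Fin 2) → ℂ) :
    cobCogate A (C + D) = cobCogate A C + cobCogate A D := by
  funext b
  simp only [cobCogate, Pi.add_apply, add_mul, Finset.sum_add_distrib]

theorem cobCogate_ket (A : Fin n → Matrix (Fin 2) (Fin 2) ℂ) (v b : Fin n → Fin 2) :
    cobCogate A (ket v) b = ∏ i, (A i)⁻¹ (v i) (b i) := by
  simp [cobCogate, ket]

theorem card_supp_compl (b : Fin n → Fin 2) : (supp b)ᶜ.card = n - (supp b).card := by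
  rw [Finset.card_compl, Fintype.card_fin]

theorem prod_apply_bit {M : Type*} [CommMonoid M] (f : Fin 2 → M) (b : Fin n → Fin 2) :
    ∏ i, f (b i) = f 1 ^ (supp b).card * f 0 ^ (supp b)ᶜ.card := by
  have on_ones : ∏ i ∈ supp b, f (b i) = f 1 ^ (supp b).card :=
    Finset.prod_eq_pow_card fun i hi => by rw [(Finset.mem_filter.mp hi).2]
  have on_zeros : ∏ i ∈ (supp b)ᶜ, f (b i) = f 0 ^ (supp b)ᶜ.card :=
    Finset.prod_eq_pow_card fun i hi => by
      have hb_ne : b i ≠ 1 := by simpa [supp] using hi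
      rw [show b i = 0 by omega]
  rw [← Finset.prod_mul_prod_compl (supp b), on_ones, on_zeros]

end Cogate

theorem matB_inv : matB⁻¹ = !![1/2, 1; -(1/2), 1] := by
  apply Matrix.inv_eq_right_inv
  ext i j
  fin_cases i <;> fin_cases j <;> norm_num [matB, Matrix.mul_apply, Fin.sum_univ_two]

theorem one_quarter_pow_half {k : ℕ} (hk : Even k) : (1/4 : ℂ) ^ (k / 2) = (1/2) ^ k := by
  rw [show (1/4 : ℂ) = (1/2) ^ 2 by norm_num, ← pow_mul, Nat.two_mul_div_two_of_even hk]

theorem cobCogate_matB_equal {n : ℕ} (b : Fin n → Fin 2) :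
    cobCogate (fun _ : Fin n => matB) (ket (fun _ => 0) + ket (fun _ => 1)) b =
      if Even (supp b)ᶜ.card then 2 * (1/2 : ℂ) ^ (supp b)ᶜ.card else 0 := by
  rw [cobCogate_add, Pi.add_apply, cobCogate_ket, cobCogate_ket, prod_apply_bit (matB⁻¹ 0),
    prod_apply_bit (matB⁻¹ 1), ← pow_add_neg_pow]
  simp [matB_inv]

theorem subPf_quarterSkew {n : ℕ} (K : Finset (Fin n)) (heven : Even K.card) :
    subPf (quarterSkew n) K = (1/2 : ℂ) ^ K.card := by
  have entry_eq : ∀ i j, i < j → quarterSkew n i j = 1/2 * (1/2) := fun i j hij => by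
    rw [quarterSkew, Matrix.of_apply, if_pos hij]
    norm_num
  rw [subPf_eq_prod (x := fun _ => 1/2) entry_eq K heven, Finset.prod_const]

/-- cogate half of Proposition 3.1. -/
theorem stmt2 (n : ℕ) (hn : 1 ≤ n) :
    matB⁻¹ = !![1/2, 1; -(1/2), 1] ∧
    (cobCogate (fun _ : Fin n => matB) (ket (fun _ => 0) + ket (fun _ => 1)) =
      fun b => if Even (n - (supp b).card) then
          2 * (1/4 : ℂ) ^ ((n - (supp b).card) / 2) else 0) ∧
    (∀ K : Finset (Fin n), Even K.card → subPf (quarterSkew n) K = (1/4 : ℂ) ^ (K.card / 2)) ∧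
    (cobCogate (fun _ : Fin n => matB) (ket (fun _ => 0) + ket (fun _ => 1)) =
      fun b => 2 * sPfStar (quarterSkew n) b) := by
  refine ⟨matB_inv, funext fun b => ?_, fun K hK => ?_, funext fun b => ?_⟩
  · rw [cobCogate_matB_equal, ← card_supp_compl]
    split_ifs with heven
    · rw [one_quarter_pow_half heven]
    · rfl
  · rw [subPf_quarterSkew K hK, one_quarter_pow_half hK]
  · rw [cobCogate_matB_equal, sPfStar]
    split_ifs with heven
    · rw [subPf_quarterSkew _ heven]
    · rw [subPf_of_odd _ (Nat.not_even_iff_odd.mp heven), mul_zero]
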